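/- arXiv:1810.12433 — 2 statements merged into one kernel-verified Lean document; each statement's English description precedes it below -/
import Mathlib

section
/- For every 0 < ε < 1 there exists C > 0 such that, for p ≥ C log n / n, the binomial random graph G = G_{n,p} asymptotically almost surely satisfies: for every H ∈ H^{ε,ε}_{n,p}(G), the graph G' := G ∖ H is connected. -/
/-!
If `G \ H` is disconnected, then `H` contains all edges of `G` across some cut `(A, Aᶜ)` with
`2|A| ≤ n`. Such an `H` needs larger degrees than its degree condition allows, provided that cuts
of `G`, and pairs of disjoint sets of linear size, carry nearly as many edges as expected.

Fix a small `γ` compared with `ε`. If `|A| ≤ 3γn`, averaging the edges across the cut over `A`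
gives a vertex of `H`-degree at least `(1 - γ)(n - |A|)p`, while the condition at `i = 1` bounds
all `H`-degrees by `(n - 1)p - εnp`, its second alternative being negative. If `|A| > 3γn`, all
but at most `f = ⌊γn⌋` vertices on either side have `H`-degree at least `(1 - γ)p` times the size
of the other side, and both alternatives of the condition fail at `i = |A| - f`.

The edge counts follow from a Chernoff bound. The union bound over cuts converges because the
failure probability `n ^ (-2|A|)` is summed to `(1 + n⁻²)ⁿ - 1`; for pairs of linear sets the
failure probability `exp(-4n)` beats the `4ⁿ` pairs.
-/

open Filter Real

namespace Resilience

variable {V : Type*}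

/-- The degree of a vertex, as the cardinality of its neighbourhood. -/
noncomputable def deg (G : SimpleGraph V) (v : V) : ℕ := (G.neighborSet v).ncard

/-- The neighbourhood of a set of vertices: all vertices with a neighbour in `X`. -/
def nbhd (G : SimpleGraph V) (X : Set V) : Set V := {v | ∃ x ∈ X, G.Adj v x}

/-- The minimum degree over a set of vertices. -/
noncomputable def minDeg (G : SimpleGraph V) (X : Set V) : ℕ :=
  sInf ((fun v => deg G v) '' X)

/-- The number of edges of `G` with one endpoint in `X` and the other in `Y`. -/
noncomputable def eBetween (G : SimpleGraph V) (X Y : Set V) : ℕ :=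
  {e ∈ G.edgeSet | ∃ x ∈ X, ∃ y ∈ Y, e = s(x, y)}.ncard

/-- The number of edges of `G` with both endpoints in `A`. -/
noncomputable def eIn (G : SimpleGraph V) (A : Set V) : ℕ :=
  {e ∈ G.edgeSet | ∀ v ∈ e, v ∈ A}.ncard

/-- The graph on `V` whose edges are the consecutive pairs of the list `l`;
this lets us view a path, recorded as a list of distinct vertices, as a graph. -/
def listGraph (l : List V) : SimpleGraph V :=
  SimpleGraph.fromEdgeSet {e | ∃ q ∈ l.zip l.tail, e = s(q.1, q.2)}

/-- `l` is a (nonempty) path on `V` all of whose edges lie in `G`. -/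
def IsPathOn (G : SimpleGraph V) (l : List V) : Prop :=
  l ≠ [] ∧ l.Nodup ∧ l.Chain' G.Adj

/-- `l` is a longest path with all edges in `G`. -/
def IsLongestPathOn (G : SimpleGraph V) (l : List V) : Prop :=
  IsPathOn G l ∧ ∀ l' : List V, IsPathOn G l' → l'.length ≤ l.length

/-- `l'` is obtained from the path `l` (with fixed last endpoint) by a single rotation
within `G`, whose broken edge lies on the original path `P`.  Writing
`l = a :: t₁ ++ c :: b :: t₂`, the pivot is `b`, the new edge is `ab ∈ G`, the broken
edge is `cb` (an edge of `P`), and the rotated path is `(a :: t₁ ++ [c]).reverse ++ b :: t₂`. -/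
def IsRotation (G : SimpleGraph V) (P l l' : List V) : Prop :=
  ∃ (a c b : V) (t₁ t₂ : List V),
    l = a :: t₁ ++ c :: b :: t₂ ∧ G.Adj a b ∧ (listGraph P).Adj c b ∧
    l' = (a :: t₁ ++ [c]).reverse ++ b :: t₂

/-- The set of paths obtainable from `P` by at most `t` successive rotations within `G`
with fixed last endpoint, all broken edges lying on `P`. -/
def rotSet (G : SimpleGraph V) (P : List V) : ℕ → Set (List V)
  | 0 => {P}
  | t + 1 => rotSet G P t ∪ {l' | ∃ l ∈ rotSet G P t, IsRotation G P l l'}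

/-- `R^t_{G,P,u}`: the set of endpoints of paths obtainable from `P` by at most `t`
successive rotations within `G` with fixed last endpoint. -/
def Rset (G : SimpleGraph V) (P : List V) (t : ℕ) : Set V :=
  {x | ∃ l ∈ rotSet G P t, l.head? = some x}

/-- The family `H^ε_{n,p}` of Pósa-type subgraphs: there is an ordering of the vertices
with non-increasing degrees such that `d_H(v_i) ≤ (n-i)p - εnp` for all `i < n/2`
(1-based indexing). -/
def PosaFamily (n : ℕ) (p ε : ℝ) (H : SimpleGraph (Fin n)) : Prop :=
  ∃ v : Fin n → Fin n, Function.Bijective v ∧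
    (∀ i j : Fin n, i ≤ j → deg H (v j) ≤ deg H (v i)) ∧
    ∀ i : Fin n, ((i.1 : ℝ) + 1) < n / 2 →
      (deg H (v i) : ℝ) ≤ ((n : ℝ) - ((i.1 : ℝ) + 1)) * p - ε * n * p

/-- The family `H^{ε,δ}_{n,p}` of (shifted) Chvátal-type subgraphs, where the shift
`δn` is recorded as a natural number `s`: there is an ordering of the vertices with
non-increasing degrees such that for all `i < n/2` (1-based indexing), either
`d_H(v_i) ≤ (n-i)p - εnp` or `d_H(v_{n-i-s}) ≤ ip - εnp`. -/
def ChvatalFamily (n : ℕ) (p ε : ℝ) (s : ℕ) (H : SimpleGraph (Fin n)) : Prop :=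
  ∃ v : Fin n → Fin n, Function.Bijective v ∧
    (∀ i j : Fin n, i ≤ j → deg H (v j) ≤ deg H (v i)) ∧
    ∀ i : Fin n, ((i.1 : ℝ) + 1) < n / 2 →
      ((deg H (v i) : ℝ) ≤ ((n : ℝ) - ((i.1 : ℝ) + 1)) * p - ε * n * p ∨
       (deg H (v ⟨n - (i.1 + 1) - s - 1, by have := i.2; omega⟩) : ℝ) ≤
         ((i.1 : ℝ) + 1) * p - ε * n * p)

/-- The probability weight of a fixed graph `G` in the binomial random graph `G_{n,p}`. -/
noncomputable def weight (n : ℕ) (p : ℝ) (G : SimpleGraph (Fin n)) : ℝ :=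
  p ^ G.edgeSet.ncard * (1 - p) ^ (n.choose 2 - G.edgeSet.ncard)

open Classical in
/-- The probability that the binomial random graph `G_{n,p}` satisfies the property `Q`. -/
noncomputable def Pr (n : ℕ) (p : ℝ) (Q : SimpleGraph (Fin n) → Prop) : ℝ :=
  ∑ G : SimpleGraph (Fin n), if Q G then weight n p G else 0

/-- Property `RE(δ)` for a (connected) graph `G` on `n` vertices: for every path `P`
on the vertex set, either `G ∪ P` has a longer path, or there are at least `δn` vertices
`v`, each with a set `T v` of at least `δn` vertices `w`, such that `G ∪ P` has a path
from `v` to `w` with the same vertex set as `P`. -/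
def RE (n : ℕ) (δ : ℝ) (G : SimpleGraph (Fin n)) : Prop :=
  G.Connected ∧
  ∀ P : List (Fin n), P ≠ [] → P.Nodup →
    (∃ Q : List (Fin n), IsPathOn (G ⊔ listGraph P) Q ∧ P.length < Q.length) ∨
    (∃ S : Set (Fin n), δ * n ≤ S.ncard ∧
      ∃ T : Fin n → Set (Fin n), (∀ v ∈ S, δ * n ≤ (T v).ncard) ∧
        ∀ v ∈ S, ∀ w ∈ T v, ∃ Q : List (Fin n),
          IsPathOn (G ⊔ listGraph P) Q ∧ Q.head? = some v ∧ Q.getLast? = some w ∧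
          Q.toFinset = P.toFinset)

/-- `G₂` complements `G₁` (with respect to parameter `δ` as in `RE(δ)`): for every path
`P` on the vertex set, either `G₁ ∪ P` has a longer path, or there are sets `S`, `T v`
as in the definition of `RE(δ)` together with `v ∈ S` and `w ∈ T v` such that `vw` is an
edge of `G₁ ∪ G₂`. -/
def Complements (n : ℕ) (δ : ℝ) (G₁ G₂ : SimpleGraph (Fin n)) : Prop :=
  ∀ P : List (Fin n), P ≠ [] → P.Nodup →
    (∃ Q : List (Fin n), IsPathOn (G₁ ⊔ listGraph P) Q ∧ P.length < Q.length) ∨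
    (∃ S : Set (Fin n), δ * n ≤ S.ncard ∧
      ∃ T : Fin n → Set (Fin n), (∀ v ∈ S, δ * n ≤ (T v).ncard) ∧
        (∀ v ∈ S, ∀ w ∈ T v, ∃ Q : List (Fin n),
          IsPathOn (G₁ ⊔ listGraph P) Q ∧ Q.head? = some v ∧ Q.getLast? = some w ∧
          Q.toFinset = P.toFinset) ∧
        ∃ v ∈ S, ∃ w ∈ T v, (G₁ ⊔ G₂).Adj v w)


section Chernoff

open MeasureTheory ProbabilityTheory unitInterval
open scoped Finset SimpleGraph

open Classical in
theorem exp_mul_ncard_inter {ι : Type*} (s : Set ι) (S : Finset ι) (t : ℝ) :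
    exp (t * (s ∩ S).ncard) = ∏ i : S, if ↑i ∈ s then exp t else 1 := by
  rw [Finset.prod_coe_sort S (fun i ↦ if i ∈ s then exp t else 1), Finset.prod_ite,
    Finset.prod_const, Finset.prod_const_one, mul_one, ← exp_nat_mul, mul_comm,
    ← Set.ncard_coe_finset, Finset.coe_filter, Set.inter_comm]
  rfl

theorem mgf_ncard_inter_setBernoulli {ι : Type*} {u : Set ι} {S : Finset ι} (hS : ↑S ⊆ u)
    (p : I) (t : ℝ) :
    mgf (fun s : Set ι ↦ ((s ∩ S).ncard : ℝ)) setBer(u, p) t = (p * exp t + (1 - p)) ^ #S := by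
  classical
  let μ (i : ι) : Measure Prop := unitInterval.toNNReal p • Measure.dirac (i ∈ u) +
    unitInterval.toNNReal (σ p) • Measure.dirac False
  have marginal (i : S) : ∫ q, (if q then exp t else 1) ∂(μ i) = p * exp t + (1 - p) := by
    rw [integral_add_measure (by simp) (by simp), integral_smul_nnreal_measure,
      integral_smul_nnreal_measure]
    simp [hS i.2, NNReal.smul_def]
  calc mgf (fun s : Set ι ↦ ((s ∩ S).ncard : ℝ)) setBer(u, p) t
      = ∫ q, ∏ i : S, (if q i then exp t else 1) ∂Measure.infinitePi μ := by
        simp only [mgf, exp_mul_ncard_inter, setBernoulli_eq_map]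
        exact integral_map_equiv MeasurableEquiv.setOfPred _
    _ = ∫ q : S → Prop, ∏ i, (if q i then exp t else 1) ∂Measure.pi fun i : S ↦ μ i :=
        integral_restrict_infinitePi (X := fun _ ↦ Prop) (μ := μ)
          (f := fun q : S → Prop ↦ ∏ i, (if q i then exp t else 1))
          Measurable.of_discrete.aestronglyMeasurable
    _ = (p * exp t + (1 - p)) ^ #S := by
        rw [integral_fintype_prod_eq_prod fun (_ : S) (q : Prop) ↦ if q then exp t else 1]
        simp [marginal]

theorem map_edgeSet_binomialRandom (V : Type*) [Countable V] (p : I) :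
    G(V, p).map SimpleGraph.edgeSet = setBer(Sym2.diagSetᶜ, p) := by
  rw [SimpleGraph.binomialRandom, SimpleGraph.measurableEmbedding_edgeSet.map_comap]
  refine Measure.restrict_eq_self_of_ae_mem ?_
  filter_upwards [setBernoulli_ae_subset] with s hs
  exact ⟨.fromEdgeSet s, by simpa [← Set.disjoint_compl_right_iff_subset] using hs⟩

theorem mgf_ncard_edgeSet_inter [Countable V] {S : Finset (Sym2 V)}
    (hS : (S : Set (Sym2 V)) ⊆ Sym2.diagSetᶜ) (p : I) (t : ℝ) :
    mgf (fun G : SimpleGraph V ↦ ((G.edgeSet ∩ S).ncard : ℝ)) G(V, p) t =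
      (p * exp t + (1 - p)) ^ #S := by
  rw [← mgf_ncard_inter_setBernoulli hS p t, ← map_edgeSet_binomialRandom]
  exact (SimpleGraph.measurableEmbedding_edgeSet.integral_map
    (fun s : Set (Sym2 V) ↦ exp (t * (s ∩ S).ncard))).symm

instance discreteMeasurableSpace_simpleGraph [Finite V] :
    DiscreteMeasurableSpace (SimpleGraph V) :=
  have : MeasurableSingletonClass (SimpleGraph V) := ⟨fun G ↦ by
    rw [← Set.preimage_image_eq {G} SimpleGraph.edgeSet_injective, Set.image_singleton]
    exact SimpleGraph.measurable_edgeSet (measurableSet_singleton _)⟩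
  inferInstance

theorem measureReal_ncard_edgeSet_inter_le [Finite V] {S : Finset (Sym2 V)}
    (hS : (S : Set (Sym2 V)) ⊆ Sym2.diagSetᶜ) (p : I) {δ : ℝ} (hδ : 0 ≤ δ) (hδ1 : δ ≤ 1) :
    G(V, p).real {G | ((G.edgeSet ∩ S).ncard : ℝ) ≤ (1 - δ) * (#S * p)} ≤
      exp (-(δ ^ 2 * (#S * p) / 4)) := by
  -- Markov for the exponential moment at `t = -δ / 2`, the minimiser of `δ t + t ^ 2`.
  have exp_le : exp (-(δ / 2)) - 1 ≤ -(δ / 2) + (δ / 2) ^ 2 := by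
    have := (abs_le.1 <| abs_exp_sub_one_sub_id_le (x := -(δ / 2))
      (abs_le.2 ⟨by linarith, by linarith⟩)).2
    linarith [neg_sq (δ / 2)]
  have mgf_le : (p * exp (-(δ / 2)) + (1 - p)) ^ #S ≤
      exp (#S * p * (-(δ / 2) + (δ / 2) ^ 2)) :=
    calc (p * exp (-(δ / 2)) + (1 - p)) ^ #S
        ≤ exp (p * (exp (-(δ / 2)) - 1)) ^ #S := by
          gcongr
          · exact add_nonneg (mul_nonneg p.2.1 (exp_pos _).le) (sub_nonneg.2 p.2.2)
          · linarith [add_one_le_exp (p * (exp (-(δ / 2)) - 1))]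
      _ = exp (#S * p * (exp (-(δ / 2)) - 1)) := by rw [← exp_nat_mul, mul_assoc]
      _ ≤ _ := by gcongr; exact mul_nonneg (Nat.cast_nonneg _) p.2.1
  calc G(V, p).real {G | ((G.edgeSet ∩ S).ncard : ℝ) ≤ (1 - δ) * (#S * p)}
      ≤ exp (-(-(δ / 2)) * ((1 - δ) * (#S * p))) * (p * exp (-(δ / 2)) + (1 - p)) ^ #S := by
        rw [← mgf_ncard_edgeSet_inter hS]
        exact measure_le_le_exp_mul_mgf _ (by linarith) .of_finite
    _ ≤ exp (-(-(δ / 2)) * ((1 - δ) * (#S * p))) *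
          exp (#S * p * (-(δ / 2) + (δ / 2) ^ 2)) := by gcongr
    _ = exp (-(δ ^ 2 * (#S * p) / 4)) := by rw [← exp_add]; ring_nf

theorem Pr_eq_measureReal (n : ℕ) (p : I) (Q : SimpleGraph (Fin n) → Prop) :
    Pr n p Q = G(Fin n, p).real {G | Q G} := by
  classical
  rw [Pr, ← Finset.sum_filter, ← Finset.coe_filter_univ, ← sum_measureReal_singleton]
  simp [measureReal_def, weight]

end Chernoff

section DenseCuts

open MeasureTheory unitInterval
open scoped Finset SimpleGraph

theorem eBetween_eq_ncard_inter [DecidableEq V] (G : SimpleGraph V) (X Y : Finset V) :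
    eBetween G X Y = (G.edgeSet ∩ ↑((X ×ˢ Y).image fun q ↦ s(q.1, q.2))).ncard := by
  refine congrArg Set.ncard (Set.ext fun e ↦ ?_)
  simp only [Set.mem_ofPred_eq, Set.mem_inter_iff, Finset.mem_coe, Finset.mem_image,
    Finset.mem_product, Prod.exists, and_assoc, eq_comm]
  grind

theorem card_image_mk_product [DecidableEq V] {X Y : Finset V} (hXY : Disjoint X Y) :
    #((X ×ˢ Y).image fun q ↦ s(q.1, q.2)) = #X * #Y := by
  rw [Finset.card_image_of_injOn, Finset.card_product]
  rintro ⟨x, y⟩ hxy ⟨x', y'⟩ hxy' h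
  rw [Finset.mem_coe, Finset.mem_product] at hxy hxy'
  obtain ⟨rfl, rfl⟩ | ⟨rfl, rfl⟩ := Sym2.eq_iff.1 h
  · rfl
  · exact absurd hxy'.2 (Finset.disjoint_left.1 hXY hxy.1)

theorem measureReal_eBetween_lt_le [Finite V] {X Y : Finset V} (hXY : Disjoint X Y) (p : I) {δ : ℝ}
    (hδ : 0 ≤ δ) (hδ1 : δ ≤ 1) :
    G(V, p).real {G | (eBetween G X Y : ℝ) < (1 - δ) * (#X * #Y * p)} ≤
      exp (-(δ ^ 2 * (#X * #Y * p) / 4)) := by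
  classical
  refine (measureReal_mono (Set.ofPred_subset_ofPred.2 fun _ ↦ le_of_lt)).trans ?_
  simp only [eBetween_eq_ncard_inter, ← Nat.cast_mul, ← card_image_mk_product hXY]
  refine measureReal_ncard_edgeSet_inter_le (fun e he ↦ ?_) p hδ hδ1
  obtain ⟨q, hq, rfl⟩ := Finset.mem_image.1 he
  obtain ⟨hq₁, hq₂⟩ := Finset.mem_product.1 hq
  exact fun hdiag ↦ Finset.disjoint_left.1 hXY hq₁ (hdiag ▸ hq₂)

theorem measureReal_exists_mem_le {Ω ι : Type*} [MeasurableSpace Ω] (μ : Measure Ω)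
    [IsFiniteMeasure μ] (s : Finset ι) (P : ι → Ω → Prop) :
    μ.real {ω | ∃ i ∈ s, P i ω} ≤ ∑ i ∈ s, μ.real {ω | P i ω} := by
  have exists_eq_biUnion : {ω | ∃ i ∈ s, P i ω} = ⋃ i ∈ s, {ω | P i ω} := by
    ext
    simp
  exact exists_eq_biUnion ▸ measureReal_biUnion_finset_le s _

variable [Fintype V]

/-- Any two disjoint sets of at least `γ |V|` vertices of `G` have between them at least a `1 - γ`
fraction of the edges expected in the binomial random graph with edge probability `p`. -/
def DensePairs (p γ : ℝ) (G : SimpleGraph V) : Prop :=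
  ∀ X Y : Finset V, Disjoint X Y → γ * Fintype.card V ≤ #X → γ * Fintype.card V ≤ #Y →
    (1 - γ) * (#X * #Y * p) ≤ eBetween G X Y

theorem measureReal_eBetween_lt_le_exp_neg {γ : ℝ} (hγ : 0 ≤ γ) (hγ1 : γ ≤ 1) {p : I}
    (hp : 16 ≤ γ ^ 4 * (Fintype.card V * p)) {X Y : Finset V} (hXY : Disjoint X Y)
    (hX : γ * Fintype.card V ≤ #X) (hY : γ * Fintype.card V ≤ #Y) :
    G(V, p).real {G | (eBetween G X Y : ℝ) < (1 - γ) * (#X * #Y * p)} ≤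
      exp (-(4 * Fintype.card V)) := by
  refine (measureReal_eBetween_lt_le hXY p hγ hγ1).trans (exp_le_exp.2 (neg_le_neg ?_))
  calc (4 : ℝ) * Fintype.card V = 16 * Fintype.card V / 4 := by ring
    _ ≤ γ ^ 4 * (Fintype.card V * p) * Fintype.card V / 4 := by gcongr
    _ = γ ^ 2 * ((γ * Fintype.card V) * (γ * Fintype.card V) * p) / 4 := by ring
    _ ≤ γ ^ 2 * (#X * #Y * p) / 4 := by gcongr; exact p.2.1

theorem four_pow_mul_exp_neg_le {n : ℕ} (hn : 0 < n) : 4 ^ n * exp (-(4 * n)) ≤ 1 / n := by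
  have four_le : (4 : ℝ) ≤ exp 2 := by
    linarith [quadratic_le_exp_of_nonneg (x := 2) zero_le_two]
  calc 4 ^ n * exp (-(4 * n)) ≤ exp 2 ^ n * exp (-(4 * n)) := by gcongr
    _ = 1 / exp (2 * n) := by
        rw [← exp_nat_mul, ← exp_add, one_div, ← exp_neg]
        ring_nf
    _ ≤ 1 / n := by
        gcongr
        linarith [add_one_le_exp (2 * (n : ℝ)), Nat.cast_nonneg (α := ℝ) n]

theorem measureReal_not_densePairs_le {γ : ℝ} (hγ : 0 ≤ γ) (hγ1 : γ ≤ 1) {p : I}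
    (hp : 16 ≤ γ ^ 4 * (Fintype.card V * p)) :
    G(V, p).real {G | ¬ DensePairs p γ G} ≤ 1 / Fintype.card V := by
  classical
  have card_pos : 0 < Fintype.card V := Nat.pos_of_ne_zero fun h ↦ by norm_num [h] at hp
  let pairs : Finset (Finset V × Finset V) := {q | Disjoint q.1 q.2 ∧
    γ * Fintype.card V ≤ #q.1 ∧ γ * Fintype.card V ≤ #q.2}
  have card_pairs_le : #pairs ≤ 4 ^ Fintype.card V := by
    refine (Finset.card_filter_le _ _).trans_eq ?_
    simp [← mul_pow]
  calc G(V, p).real {G | ¬ DensePairs p γ G}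
      = G(V, p).real {G | ∃ q ∈ pairs,
          (eBetween G q.1 q.2 : ℝ) < (1 - γ) * (#q.1 * #q.2 * p)} := by
        simp [pairs, DensePairs, and_assoc]
    _ ≤ ∑ q ∈ pairs, G(V, p).real {G | (eBetween G q.1 q.2 : ℝ) < (1 - γ) * (#q.1 * #q.2 * p)} :=
        measureReal_exists_mem_le ..
    _ ≤ ∑ q ∈ pairs, exp (-(4 * Fintype.card V)) :=
        Finset.sum_le_sum fun q hq ↦
          have ⟨hdisj, hX, hY⟩ := (Finset.mem_filter.1 hq).2
          measureReal_eBetween_lt_le_exp_neg hγ hγ1 hp hdisj hX hY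
    _ ≤ 4 ^ Fintype.card V * exp (-(4 * Fintype.card V)) := by
        rw [Finset.sum_const, nsmul_eq_mul]
        gcongr
        exact_mod_cast card_pairs_le
    _ ≤ 1 / Fintype.card V := four_pow_mul_exp_neg_le card_pos

theorem sum_nonempty_pow_card (y : ℝ) :
    ∑ A : Finset V with A.Nonempty, y ^ #A = (1 + y) ^ Fintype.card V - 1 := by
  classical
  have filter_eq : ({A | A.Nonempty} : Finset (Finset V)) = Finset.univ.erase ∅ := by
    ext A
    simp [Finset.nonempty_iff_ne_empty]
  have binomial := Fintype.sum_pow_mul_eq_add_pow V y 1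
  simp only [one_pow, mul_one] at binomial
  rw [filter_eq, Finset.sum_erase_eq_sub (Finset.mem_univ _), binomial, Finset.card_empty, pow_zero,
    add_comm]

theorem one_add_one_div_sq_pow_sub_one_le (n : ℕ) : (1 + 1 / (n : ℝ) ^ 2) ^ n - 1 ≤ 2 / n := by
  have inv_le_one : |(n : ℝ)⁻¹| ≤ 1 := by
    rw [abs_of_nonneg (by positivity)]
    exact Nat.cast_inv_le_one n
  calc (1 + 1 / (n : ℝ) ^ 2) ^ n - 1
      ≤ exp (1 / (n : ℝ) ^ 2) ^ n - 1 := by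
        gcongr
        linarith [add_one_le_exp (1 / (n : ℝ) ^ 2)]
    _ = exp (n : ℝ)⁻¹ - 1 := by
        rw [← exp_nat_mul, mul_one_div, pow_two, div_self_mul_self']
    _ ≤ 2 * |(n : ℝ)⁻¹| := (le_abs_self _).trans (abs_exp_sub_one_le inv_le_one)
    _ = 2 / n := by rw [abs_of_nonneg (by positivity), div_eq_mul_inv]

variable [DecidableEq V]

/-- Every cut of `G` carries at least a `1 - γ` fraction of the edges it is expected to carry in the
binomial random graph with edge probability `p`. A cut is given by its smaller side. -/
def DenseCuts (p γ : ℝ) (G : SimpleGraph V) : Prop :=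
  ∀ A : Finset V, A.Nonempty → 2 * #A ≤ Fintype.card V →
    (1 - γ) * (#A * #Aᶜ * p) ≤ eBetween G A ↑Aᶜ

theorem measureReal_eBetween_compl_lt_le {γ : ℝ} (hγ : 0 ≤ γ) (hγ1 : γ ≤ 1) {p : I}
    (hp : 16 * log (Fintype.card V) ≤ γ ^ 2 * (Fintype.card V * p)) {A : Finset V}
    (hA : A.Nonempty) (hcard : 2 * #A ≤ Fintype.card V) :
    G(V, p).real {G | (eBetween G A ↑Aᶜ : ℝ) < (1 - γ) * (#A * #Aᶜ * p)} ≤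
      (1 / (Fintype.card V : ℝ) ^ 2) ^ #A := by
  have card_pos : (0 : ℝ) < Fintype.card V := by
    exact_mod_cast hA.card_pos.trans_le A.card_le_univ
  have half_le : (Fintype.card V : ℝ) / 2 ≤ #Aᶜ := by
    rw [Finset.card_compl, Nat.cast_sub A.card_le_univ]
    have : (2 : ℝ) * #A ≤ Fintype.card V := mod_cast hcard
    linarith
  have two_mul_log_le : 2 * log (Fintype.card V) ≤ γ ^ 2 * (#Aᶜ * p) / 4 :=
    calc 2 * log (Fintype.card V) ≤ γ ^ 2 * (Fintype.card V / 2 * p) / 4 := by linarith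
      _ ≤ γ ^ 2 * (#Aᶜ * p) / 4 := by gcongr; exact p.2.1
  calc G(V, p).real {G | (eBetween G A ↑Aᶜ : ℝ) < (1 - γ) * (#A * #Aᶜ * p)}
      ≤ exp (-(γ ^ 2 * (#A * #Aᶜ * p) / 4)) :=
        measureReal_eBetween_lt_le disjoint_compl_right p hγ hγ1
    _ ≤ exp (#A * -(2 * log (Fintype.card V))) :=
        exp_le_exp.2 <| by
          linarith [mul_le_mul_of_nonneg_left two_mul_log_le (Nat.cast_nonneg (α := ℝ) #A)]
    _ = (1 / (Fintype.card V : ℝ) ^ 2) ^ #A := by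
        rw [exp_nat_mul, exp_neg, two_mul, exp_add, exp_log card_pos, one_div, pow_two]

theorem measureReal_not_denseCuts_le {γ : ℝ} (hγ : 0 ≤ γ) (hγ1 : γ ≤ 1) {p : I}
    (hp : 16 * log (Fintype.card V) ≤ γ ^ 2 * (Fintype.card V * p)) :
    G(V, p).real {G | ¬ DenseCuts p γ G} ≤ 2 / Fintype.card V :=
  calc G(V, p).real {G | ¬ DenseCuts p γ G}
      = G(V, p).real {G | ∃ A ∈ ({A | A.Nonempty ∧ 2 * #A ≤ Fintype.card V} : Finset (Finset V)),
          (eBetween G A ↑Aᶜ : ℝ) < (1 - γ) * (#A * #Aᶜ * p)} := by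
        simp [DenseCuts, and_assoc]
    _ ≤ ∑ A : Finset V with A.Nonempty ∧ 2 * #A ≤ Fintype.card V,
          G(V, p).real {G | (eBetween G A ↑Aᶜ : ℝ) < (1 - γ) * (#A * #Aᶜ * p)} :=
        measureReal_exists_mem_le ..
    _ ≤ ∑ A : Finset V with A.Nonempty ∧ 2 * #A ≤ Fintype.card V,
          (1 / (Fintype.card V : ℝ) ^ 2) ^ #A :=
        Finset.sum_le_sum fun A hA ↦
          have ⟨hne, hcard⟩ := (Finset.mem_filter.1 hA).2
          measureReal_eBetween_compl_lt_le hγ hγ1 hp hne hcard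
    _ ≤ ∑ A : Finset V with A.Nonempty, (1 / (Fintype.card V : ℝ) ^ 2) ^ #A := by
        gcongr
        exact And.left
    _ ≤ 2 / Fintype.card V :=
        (sum_nonempty_pow_card _).trans_le (one_add_one_div_sq_pow_sub_one_le _)

end DenseCuts

section AbsorbedCuts

open scoped Finset

variable {G H : SimpleGraph V}

theorem eBetween_le_sum_deg [Finite V] {X : Finset V} {Y : Set V}
    (hGH : ∀ x ∈ X, ∀ y ∈ Y, G.Adj x y → H.Adj x y) : eBetween G X Y ≤ ∑ x ∈ X, deg H x := by
  have subset_iUnion : {e ∈ G.edgeSet | ∃ x ∈ (X : Set V), ∃ y ∈ Y, e = s(x, y)} ⊆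
      ⋃ x ∈ X, (fun y ↦ s(x, y)) '' H.neighborSet x := by
    rintro _ ⟨hxy, x, hx, y, hy, rfl⟩
    exact Set.mem_biUnion hx ⟨y, hGH x hx y hy hxy, rfl⟩
  calc eBetween G X Y ≤ (⋃ x ∈ X, (fun y ↦ s(x, y)) '' H.neighborSet x).ncard :=
        Set.ncard_le_ncard subset_iUnion (Set.toFinite _)
    _ ≤ ∑ x ∈ X, ((fun y ↦ s(x, y)) '' H.neighborSet x).ncard := Finset.set_ncard_biUnion_le ..
    _ ≤ ∑ x ∈ X, deg H x := Finset.sum_le_sum fun x _ ↦ Set.ncard_image_le (Set.toFinite _)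

theorem exists_le_deg_of_mul_le_eBetween [Finite V] {X : Finset V} {Y : Set V} (hX : X.Nonempty)
    (hGH : ∀ x ∈ X, ∀ y ∈ Y, G.Adj x y → H.Adj x y) {d : ℝ} (hd : #X * d ≤ eBetween G X Y) :
    ∃ x ∈ X, d ≤ deg H x := by
  refine Finset.exists_le_of_sum_le hX ?_
  calc ∑ _x ∈ X, d = #X * d := by rw [Finset.sum_const, nsmul_eq_mul]
    _ ≤ eBetween G X Y := hd
    _ ≤ ∑ x ∈ X, (deg H x : ℝ) := mod_cast eBetween_le_sum_deg hGH

theorem DenseCuts.exists_le_deg [Fintype V] [DecidableEq V] {p γ : ℝ} (hG : DenseCuts p γ G)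
    {A : Finset V} (hA : A.Nonempty) (hcard : 2 * #A ≤ Fintype.card V)
    (hGH : ∀ x ∈ A, ∀ y ∈ Aᶜ, G.Adj x y → H.Adj x y) : ∃ x ∈ A, (1 - γ) * (#Aᶜ * p) ≤ deg H x :=
  exists_le_deg_of_mul_le_eBetween hA hGH (by linarith [hG A hA hcard])

theorem DensePairs.card_le_card_filter_add_floor [Fintype V] {p γ : ℝ} (hG : DensePairs p γ G)
    (hpos : 0 < γ * Fintype.card V) {A B : Finset V} (hAB : Disjoint A B)
    (hB : γ * Fintype.card V ≤ #B) (hGH : ∀ x ∈ A, ∀ y ∈ B, G.Adj x y → H.Adj x y) :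
    #A ≤ #{x ∈ A | (1 - γ) * (#B * p) ≤ deg H x} + ⌊γ * Fintype.card V⌋₊ := by
  have card_low_le : #{x ∈ A | ¬(1 - γ) * (#B * p) ≤ deg H x} ≤ ⌊γ * Fintype.card V⌋₊ := by
    by_contra! hlt
    have hcard := (Nat.lt_of_floor_lt hlt).le
    have hne := Finset.card_pos.1 (Nat.cast_pos.1 (hpos.trans_le hcard))
    obtain ⟨x, hx, hdeg⟩ := exists_le_deg_of_mul_le_eBetween hne
      (fun x hx ↦ hGH x (Finset.mem_filter.1 hx).1) (d := (1 - γ) * (#B * p)) (by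
        linarith [hG _ B (hAB.mono_left (Finset.filter_subset _ _)) hcard hB])
    exact (Finset.mem_filter.1 hx).2.not_ge hdeg
  rw [← Finset.card_filter_add_card_filter_not fun x ↦ (1 - γ) * (#B * p) ≤ deg H x]
  gcongr

theorem connected_of_exists_adj_compl [Fintype V] [DecidableEq V] [Nonempty V]
    (hG : ∀ A : Finset V, A.Nonempty → 2 * #A ≤ Fintype.card V → ∃ x ∈ A, ∃ y ∈ Aᶜ, G.Adj x y) :
    G.Connected := by
  classical
  refine ⟨fun x y ↦ by_contra fun hxy ↦ ?_⟩
  let A : Finset V := {z | G.Reachable x z}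
  have not_adj {z w : V} (hz : z ∈ A) (hw : w ∈ Aᶜ) : ¬G.Adj z w := fun hzw ↦
    Finset.mem_compl.1 hw <| Finset.mem_filter.2
      ⟨Finset.mem_univ w, (Finset.mem_filter.1 hz).2.trans hzw.reachable⟩
  obtain hcard | hcard := le_total #A #Aᶜ
  · obtain ⟨z, hz, w, hw, hzw⟩ := hG A ⟨x, by simp [A]⟩ (by linarith [A.card_add_card_compl])
    exact not_adj hz hw hzw
  · obtain ⟨z, hz, w, hw, hzw⟩ :=
      hG Aᶜ ⟨y, by simpa [A] using hxy⟩ (by linarith [A.card_add_card_compl])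
    exact not_adj (compl_compl A ▸ hw) hz hzw.symm

end AbsorbedCuts

section Chvatal

open scoped Finset

theorem card_filter_lt_le_of_antitone {n : ℕ} {α β : Type*} [Fintype α] [LinearOrder β]
    {v : Fin n → α} (hv : v.Surjective) {f : α → β} (hf : Antitone (f ∘ v)) {k : Fin n} {d : β}
    (hk : f (v k) ≤ d) : #{x | d < f x} ≤ k := by
  classical
  have subset_image : ({x | d < f x} : Finset α) ⊆ (Finset.Iio k).image v := fun x hx ↦ by
    obtain ⟨j, rfl⟩ := hv x
    refine Finset.mem_image_of_mem v (Finset.mem_Iio.2 (lt_of_not_ge fun hkj ↦ ?_))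
    exact ((Finset.mem_filter.1 hx).2.trans_le (hf hkj)).not_ge hk
  calc #{x | d < f x} ≤ #((Finset.Iio k).image v) := Finset.card_le_card subset_image
    _ ≤ #(Finset.Iio k) := Finset.card_image_le
    _ = k := Fin.card_Iio k

theorem chvatal_threshold_lt {n p ε γ k c : ℝ} (hn : 0 ≤ n) (hp : 0 < p) (hγ : 0 ≤ γ)
    (hγε : 4 * γ ≤ ε) (hc : c ≤ n) (hk : k < c + 3 * γ * n) :
    k * p - ε * n * p < (1 - γ) * (c * p) :=
  calc k * p - ε * n * p = (k - ε * n) * p := by ring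
    _ < (1 - γ) * c * p := by
        gcongr
        linarith [mul_le_mul_of_nonneg_right hγε hn, mul_le_mul_of_nonneg_left hc hγ]
    _ = (1 - γ) * (c * p) := mul_assoc ..

namespace ChvatalFamily

variable {n s : ℕ} {p ε γ : ℝ} {G H : SimpleGraph (Fin n)}

theorem card_lt_or_card_lt (hH : ChvatalFamily n p ε s H) {i : ℕ} (hi : 0 < i)
    (hin : (i : ℝ) < n / 2) :
    #{x | (n - i) * p - ε * n * p < deg H x} < i ∨ #{x | i * p - ε * n * p < deg H x} < n - i := by
  obtain ⟨v, hv, hdeg, hchv⟩ := hH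
  have antitone_deg : Antitone ((fun x ↦ (deg H x : ℝ)) ∘ v) := fun j k hjk ↦
    Nat.cast_le.2 (hdeg j k hjk)
  have hlt : i < n := by
    have : (i : ℝ) < n := by linarith [Nat.cast_nonneg (α := ℝ) n]
    exact_mod_cast this
  have cast_pred : ((i - 1 : ℕ) : ℝ) + 1 = i := by exact_mod_cast Nat.sub_add_cancel hi
  have hidx := hchv ⟨i - 1, by omega⟩
  simp only [cast_pred] at hidx
  refine (hidx hin).imp (fun h ↦ ?_) fun h ↦ ?_
  all_goals
    refine (card_filter_lt_le_of_antitone hv.surjective antitone_deg h).trans_lt ?_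
    dsimp only
    omega

theorem not_of_high_degrees {i : ℕ} (hi : 0 < i)
    (hin : (i : ℝ) < n / 2) {S T : Finset (Fin n)} (hS : i ≤ #S) (hT : n - i ≤ #T)
    (hdegS : ∀ x ∈ S, (n - i) * p - ε * n * p < deg H x)
    (hdegT : ∀ x ∈ T, i * p - ε * n * p < deg H x) : ¬ChvatalFamily n p ε s H := by
  intro hH
  obtain h | h := hH.card_lt_or_card_lt hi hin
  · exact h.not_ge <| hS.trans <| Finset.card_le_card fun x hx ↦ by simpa using hdegS x hx
  · exact h.not_ge <| hT.trans <| Finset.card_le_card fun x hx ↦ by simpa using hdegT x hx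

theorem deg_le (hH : ChvatalFamily n p ε s H) (hp : 0 < p) (hn : 2 < n) (hε : 1 < ε * n)
    (x : Fin n) : deg H x ≤ (n - 1) * p - ε * n * p := by
  have one_lt_half : ((1 : ℕ) : ℝ) < n / 2 := by
    have : (2 : ℝ) < n := mod_cast hn
    norm_num
    linarith
  obtain h | h := hH.card_lt_or_card_lt one_pos one_lt_half
  · rw [Nat.lt_one_iff, Finset.card_eq_zero, Finset.filter_eq_empty_iff] at h
    simpa using h (Finset.mem_univ x)
  · have threshold_neg : ((1 : ℕ) : ℝ) * p - ε * n * p < 0 := by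
      rw [← sub_mul, Nat.cast_one]
      exact mul_neg_of_neg_of_pos (by linarith) hp
    rw [Finset.filter_true_of_mem fun y _ ↦ threshold_neg.trans_le (Nat.cast_nonneg _),
      Finset.card_univ, Fintype.card_fin] at h
    omega

theorem lt_card_of_absorbs_cut (hH : ChvatalFamily n p ε s H) (hG : DenseCuts p γ G)
    (hp : 0 < p) (hγ : 0 < γ) (hγ4 : 4 * γ ≤ 1) (hγε : 4 * γ ≤ ε) (hγn : 1 ≤ γ * n)
    {A : Finset (Fin n)} (hA : A.Nonempty) (hcard : 2 * #A ≤ n)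
    (hGH : ∀ x ∈ A, ∀ y ∈ Aᶜ, G.Adj x y → H.Adj x y) : 3 * γ * n < #A := by
  by_contra! hsmall
  have four_le : (4 : ℝ) ≤ n := by nlinarith
  have four_le_mul : 4 ≤ ε * n := by nlinarith
  have card_compl : (#Aᶜ : ℝ) = n - #A := by
    rw [Finset.card_compl, Nat.cast_sub A.card_le_univ, Fintype.card_fin]
  obtain ⟨x, -, hx⟩ := hG.exists_le_deg hA (by rwa [Fintype.card_fin]) hGH
  refine lt_irrefl (deg H x : ℝ) ?_
  calc (deg H x : ℝ) ≤ (n - 1) * p - ε * n * p :=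
        hH.deg_le hp (by exact_mod_cast (by linarith : (2 : ℝ) < n)) (by linarith) x
    _ < (1 - γ) * (#Aᶜ * p) :=
        chvatal_threshold_lt (by linarith) hp hγ.le hγε (by linarith) (by linarith)
    _ ≤ deg H x := hx

theorem card_le_of_absorbs_cut (hH : ChvatalFamily n p ε s H) (hG : DensePairs p γ G)
    (hp : 0 < p) (hγ : 0 < γ) (hγε : 4 * γ ≤ ε) (hγn : 1 ≤ γ * n) {A : Finset (Fin n)}
    (hcard : 2 * #A ≤ n) (hGH : ∀ x ∈ A, ∀ y ∈ Aᶜ, G.Adj x y → H.Adj x y) :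
    #A ≤ 3 * γ * n := by
  by_contra! hlarge
  let highA : Finset (Fin n) := {x ∈ A | (1 - γ) * (#Aᶜ * p) ≤ deg H x}
  let highAc : Finset (Fin n) := {x ∈ Aᶜ | (1 - γ) * (#A * p) ≤ deg H x}
  have card_add : #A + #Aᶜ = n := by rw [A.card_add_card_compl, Fintype.card_fin]
  have card_add_real : (#A + #Aᶜ : ℝ) = n := mod_cast card_add
  have card_le : (2 * #A : ℝ) ≤ n := mod_cast hcard
  have card_A_le : #A ≤ #highA + ⌊γ * n⌋₊ := by
    simpa using hG.card_le_card_filter_add_floor (by simpa using by linarith) disjoint_compl_right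
      (by simpa using by linarith) hGH
  have card_Ac_le : #Aᶜ ≤ #highAc + ⌊γ * n⌋₊ := by
    simpa using hG.card_le_card_filter_add_floor (by simpa using by linarith) disjoint_compl_left
      (by simpa using by linarith) fun x hx y hy hxy ↦ (hGH y hy x hx hxy.symm).symm
  have floor_pos : 1 ≤ ⌊γ * n⌋₊ := Nat.le_floor (by simpa)
  have floor_le : (⌊γ * n⌋₊ : ℝ) ≤ γ * n := Nat.floor_le (by linarith)
  generalize ⌊γ * n⌋₊ = f at *
  have three_mul_lt : 3 * f < #A := by exact_mod_cast (by linarith : (3 * f : ℝ) < #A)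
  obtain ⟨i, hi⟩ := Nat.exists_eq_add_of_le (by omega : f ≤ #A)
  have hi_real : (#A : ℝ) = f + i := mod_cast hi
  have floor_pos_real : (1 : ℝ) ≤ f := mod_cast floor_pos
  have lt_of_high {k c : ℝ} {x : Fin n} (hc : c ≤ n) (hk : k < c + 3 * γ * n)
      (hx : (1 - γ) * (c * p) ≤ deg H x) : k * p - ε * n * p < deg H x :=
    (chvatal_threshold_lt n.cast_nonneg hp hγ.le hγε hc hk).trans_le hx
  have disjoint_high : Disjoint highA highAc := Finset.disjoint_filter_filter disjoint_compl_right
  refine absurd hH <| not_of_high_degrees (i := i) (S := highA)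
    (T := highA.disjUnion highAc disjoint_high) (by omega) (by linarith) (by omega)
    (by rw [Finset.card_disjUnion]; omega) (fun x hx ↦ ?_) fun x hx ↦ ?_
  · exact lt_of_high (by linarith) (by linarith) (Finset.mem_filter.1 hx).2
  · obtain hx | hx := Finset.mem_disjUnion.1 hx
    · exact lt_of_high (by linarith) (by linarith) (Finset.mem_filter.1 hx).2
    · exact lt_of_high (by linarith) (by linarith) (Finset.mem_filter.1 hx).2

theorem sdiff_connected (hH : ChvatalFamily n p ε s H) (hcuts : DenseCuts p γ G)
    (hpairs : DensePairs p γ G) (hp : 0 < p) (hγ : 0 < γ) (hγ4 : 4 * γ ≤ 1) (hγε : 4 * γ ≤ ε)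
    (hγn : 1 ≤ γ * n) : (G \ H).Connected := by
  have : Nonempty (Fin n) := Fin.pos_iff_nonempty.1 <| Nat.pos_of_ne_zero fun h ↦ by
    norm_num [h] at hγn
  refine connected_of_exists_adj_compl fun A hA hcard ↦ ?_
  rw [Fintype.card_fin] at hcard
  by_contra! hcut
  have hGH : ∀ x ∈ A, ∀ y ∈ Aᶜ, G.Adj x y → H.Adj x y := fun x hx y hy hxy ↦
    not_not.1 fun hHxy ↦ hcut x hx y hy ⟨hxy, hHxy⟩
  exact (hH.lt_card_of_absorbs_cut hcuts hp hγ hγ4 hγε hγn hA hcard hGH).not_ge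
    (hH.card_le_of_absorbs_cut hpairs hp hγ hγε hγn hcard hGH)

end ChvatalFamily

end Chvatal

section Main

open MeasureTheory unitInterval
open scoped SimpleGraph

theorem one_sub_three_div_le_measureReal [Fintype V] [DecidableEq V] {γ : ℝ} (hγ : 0 ≤ γ)
    (hγ1 : γ ≤ 1) {p : I} (hp : 16 * log (Fintype.card V) ≤ γ ^ 4 * (Fintype.card V * p))
    (hlog : 1 ≤ log (Fintype.card V)) :
    1 - 3 / Fintype.card V ≤ G(V, p).real {G | DenseCuts p γ G ∧ DensePairs p γ G} := by
  have card_mul_nonneg : 0 ≤ Fintype.card V * (p : ℝ) := mul_nonneg (Nat.cast_nonneg _) p.2.1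
  have cuts_le := measureReal_not_denseCuts_le hγ hγ1 <| hp.trans <|
    mul_le_mul_of_nonneg_right (pow_le_pow_of_le_one hγ hγ1 (by norm_num : 2 ≤ 4)) card_mul_nonneg
  have pairs_le := measureReal_not_densePairs_le hγ hγ1 (hp.trans' (by linarith))
  have compl_eq : {G : SimpleGraph V | DenseCuts p γ G ∧ DensePairs p γ G}ᶜ =
      {G | ¬DenseCuts p γ G} ∪ {G | ¬DensePairs p γ G} := by
    ext
    simp [imp_iff_not_or]
  calc (1 : ℝ) - 3 / Fintype.card V = 1 - (2 / Fintype.card V + 1 / Fintype.card V) := by ring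
    _ ≤ 1 - G(V, p).real ({G | ¬DenseCuts p γ G} ∪ {G | ¬DensePairs p γ G}) := by
        gcongr
        exact (measureReal_union_le _ _).trans (add_le_add cuts_le pairs_le)
    _ = G(V, p).real {G | DenseCuts p γ G ∧ DensePairs p γ G} := by
        rw [← compl_eq, probReal_compl_eq_one_sub .of_discrete, sub_sub_cancel]

theorem Pr_mono {n : ℕ} {p : ℝ} (hp : 0 ≤ p) (hp1 : p ≤ 1) {Q R : SimpleGraph (Fin n) → Prop}
    (hQR : ∀ G, Q G → R G) : Pr n p Q ≤ Pr n p R := by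
  lift p to I using ⟨hp, hp1⟩
  rw [Pr_eq_measureReal, Pr_eq_measureReal]
  exact measureReal_mono hQR

theorem one_sub_three_div_le_Pr_connected {n : ℕ} {p ε γ : ℝ} (hγ : 0 < γ) (hγ4 : 4 * γ ≤ 1)
    (hγε : 4 * γ ≤ ε) (hγn : 1 ≤ γ * n) (hlog : 1 ≤ log n) (hp : 16 / γ ^ 4 * log n / n ≤ p)
    (hp1 : p ≤ 1) :
    1 - 3 / n ≤ Pr n p fun G ↦
      ∀ (s : ℕ) (H : SimpleGraph (Fin n)), ChvatalFamily n p ε s H → (G \ H).Connected := by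
  have hn : (0 : ℝ) < n := pos_of_mul_pos_right (one_pos.trans_le hγn) hγ.le
  have hp0 : 0 < p := hp.trans_lt' (by positivity)
  have hp_mul : 16 * log n ≤ γ ^ 4 * (n * p) := by
    rw [div_le_iff₀ hn, div_mul_eq_mul_div, div_le_iff₀ (by positivity)] at hp
    linarith
  lift p to I using ⟨hp0.le, hp1⟩
  calc 1 - 3 / (n : ℝ) ≤ G(Fin n, p).real {G | DenseCuts p γ G ∧ DensePairs p γ G} := by
        simpa using one_sub_three_div_le_measureReal (V := Fin n) (p := p) hγ.le (by linarith)
          (by simpa) (by simpa)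
    _ ≤ _ := by
        rw [Pr_eq_measureReal]
        exact measureReal_mono fun G hG s H hH ↦ hH.sdiff_connected hG.1 hG.2 hp0 hγ hγ4 hγε hγn

end Main

theorem resilient_connected_general (ε : ℝ) (hε : 0 < ε) :
    ∃ C : ℝ, 0 < C ∧ ∀ η : ℝ, 0 < η → ∃ N : ℕ, ∀ n : ℕ, N ≤ n →
      ∀ p : ℝ, C * Real.log n / n ≤ p → p ≤ 1 →
        1 - η ≤ Pr n p (fun G =>
          ∀ (s : ℕ) (H : SimpleGraph (Fin n)), ChvatalFamily n p ε s H → (G \ H).Connected) := by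
  obtain ⟨γ, hγ, hγ4, hγε⟩ : ∃ γ : ℝ, 0 < γ ∧ 4 * γ ≤ 1 ∧ 4 * γ ≤ ε :=
    ⟨min ε 1 / 4, by positivity, by linarith [min_le_right ε 1], by linarith [min_le_left ε 1]⟩
  refine ⟨16 / γ ^ 4, by positivity, fun η hη ↦ eventually_atTop.1 ?_⟩
  filter_upwards [(tendsto_natCast_atTop_atTop.const_mul_atTop hγ).eventually_ge_atTop 1,
    (tendsto_log_atTop.comp tendsto_natCast_atTop_atTop).eventually_ge_atTop 1,
    (tendsto_const_div_atTop_nhds_zero_nat 3).eventually_le_const hη]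
    with n hγn hlog hη_le p hp hp1
  linarith [one_sub_three_div_le_Pr_connected hγ hγ4 hγε hγn hlog hp hp1]

/-- Proposition 2.5(iii).  For every `0 < ε < 1` there exists `C > 0`
such that, for `p ≥ C log n / n`, a.a.s. for every `H ∈ H^{ε,ε}_{n,p}(G)` the graph
`G ∖ H` is connected. -/
theorem resilient_connected (ε : ℝ) (hε : 0 < ε) (hε1 : ε < 1) :
    ∃ C : ℝ, 0 < C ∧ ∀ η : ℝ, 0 < η → ∃ N : ℕ, ∀ n : ℕ, N ≤ n →
      ∀ p : ℝ, C * Real.log n / n ≤ p → p ≤ 1 →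
        1 - η ≤ Pr n p (fun G =>
          ∀ H : SimpleGraph (Fin n), H ≤ G → ChvatalFamily n p ε ⌈ε * n⌉₊ H →
            (G \ H).Connected) := by
  obtain ⟨C, hC, h⟩ := resilient_connected_general ε hε
  exact ⟨C, hC, fun η hη ↦ (h η hη).imp fun N hN n hn p hp hp1 ↦ (hN n hn p hp hp1).trans <|
    Pr_mono (hp.trans' (by positivity)) hp1 fun G hG H _ hH ↦ hG _ H hH⟩

end Resilience
end

section
/- Let G be a graph, let P' be a path on V(G), and let P = v_1…v_ℓ be a longest path in the graph G ∪ P'. Then for every integer t ≥ 0 we have |R^{t+1}_{G,P,v_ℓ}| ≥ (1/2)( |N_G(R^t_{G,P,v_ℓ})| − 3|R^t_{G,P,v_ℓ}| ). -/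
/-!
Write `R_t` for `Rset G P t`. The vertices of `N_G(R_t)` lie in `R_t ∪ N_P(R_{t+1})`, and every
vertex has at most two neighbours on the path `P`, so `|N_G(R_t)| ≤ |R_t| + 2 |R_{t+1}|`.

To see the inclusion, let `v ∉ R_t` be adjacent to the first vertex `x` of a path `l` obtained by
at most `t` rotations. Since `R_t ⊆ R_{t+1}`, we may assume that `v` has no `P`-neighbour in `R_t`.
Rotations rearrange `P` into another longest path with the same last vertex, so `v` lies on `l`.
The edge broken by a rotation contains the new endpoint, so the `P`-edges that avoid `R_t`, and in
particular those at `v`, survive in `l`. As `v` is the first vertex of neither path and the last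
vertex of both or of neither, it has the same degree in both, and hence the same neighbours. Thus
the predecessor `c` of `v` on `l` is a `P`-neighbour of `v`, so the rotation of `l` along the edge
`xv` is allowed, and its new endpoint is `c`.
-/

open Filter Real

namespace Resilience

variable {V : Type*}

section ListGraph

open SimpleGraph

variable {G : SimpleGraph V} {l s u : List V} {v w : V}

lemma listGraph_nil : listGraph ([] : List V) = ⊥ := by
  simp [listGraph]

lemma listGraph_singleton (x : V) : listGraph [x] = ⊥ := by
  simp [listGraph]

lemma listGraph_cons_cons (x y : V) (l : List V) :
    listGraph (x :: y :: l) = edge x y ⊔ listGraph (y :: l) := by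
  rw [listGraph, listGraph, edge, ← fromEdgeSet_union]
  congr 1
  ext e
  simp

lemma listGraph_append_cons (s : List V) (v : V) (u : List V) :
    listGraph (s ++ v :: u) = listGraph (s ++ [v]) ⊔ listGraph (v :: u) := by
  induction s with
  | nil => simp [listGraph_singleton]
  | cons x s ih =>
    cases s with
    | nil => simp [listGraph_cons_cons, listGraph_singleton]
    | cons y s =>
      simp only [List.cons_append, listGraph_cons_cons] at ih ⊢
      rw [ih, sup_assoc]

lemma listGraph_append_cons_cons (s : List V) (c b : V) (u : List V) :
    listGraph (s ++ c :: b :: u) = listGraph (s ++ [c]) ⊔ edge c b ⊔ listGraph (b :: u) := by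
  rw [listGraph_append_cons, listGraph_cons_cons, sup_assoc]

lemma listGraph_reverse (l : List V) : listGraph l.reverse = listGraph l := by
  induction l with
  | nil => rfl
  | cons x l ih =>
    cases l with
    | nil => rfl
    | cons y l =>
      rw [List.reverse_cons, List.reverse_cons, List.append_assoc, List.singleton_append,
        listGraph_append_cons_cons, ← List.reverse_cons, ih, listGraph_singleton, sup_bot_eq,
        edge_comm, sup_comm, listGraph_cons_cons]

lemma listGraph_reverse_append_cons (a b : V) (s u : List V) :
    listGraph ((a :: s).reverse ++ b :: u) =
      listGraph (a :: s) ⊔ edge a b ⊔ listGraph (b :: u) := by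
  rw [← listGraph_reverse (a :: s), List.reverse_cons, List.append_assoc, List.singleton_append,
    listGraph_append_cons_cons]

lemma mem_of_listGraph_adj (h : (listGraph l).Adj v w) : v ∈ l := by
  induction l with
  | nil => simp [listGraph_nil] at h
  | cons x l ih =>
    cases l with
    | nil => simp [listGraph_singleton] at h
    | cons y l =>
      rw [listGraph_cons_cons, sup_adj, edge_adj] at h
      grind

lemma listGraph_le_iff_isChain (hl : l.Nodup) : listGraph l ≤ G ↔ l.IsChain G.Adj := by
  induction l with
  | nil => simp [listGraph_nil]
  | cons x l ih =>
    cases l with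
    | nil => simp [listGraph_singleton]
    | cons y l =>
      have hxy : x ≠ y := by grind
      rw [listGraph_cons_cons, sup_le_iff, edge_le_iff, or_iff_right hxy, ih hl.of_cons,
        List.isChain_cons_cons]

lemma isPathOn_iff : IsPathOn G l ↔ l ≠ [] ∧ l.Nodup ∧ listGraph l ≤ G :=
  and_congr_right fun _ => and_congr_right fun hl => (listGraph_le_iff_isChain hl).symm

lemma neighborSet_listGraph_cons (hv : v ∉ u) :
    (listGraph (v :: u)).neighborSet v = {w | w ∈ u.head?} := by
  ext w
  cases u with
  | nil => simp [listGraph_singleton]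
  | cons q u =>
    have h : ¬ (listGraph (q :: u)).Adj v w := fun h => hv (mem_of_listGraph_adj h)
    have hvq : v ≠ q := by grind
    simp only [listGraph_cons_cons, mem_neighborSet, sup_adj, h, or_false, edge_adj]
    grind

lemma neighborSet_listGraph_append_cons (h : (s ++ v :: u).Nodup) :
    (listGraph (s ++ v :: u)).neighborSet v = {w | w ∈ s.getLast?} ∪ {w | w ∈ u.head?} := by
  have hs : (listGraph (s ++ [v])).neighborSet v = {w | w ∈ s.getLast?} := by
    rw [← listGraph_reverse, List.reverse_concat, neighborSet_listGraph_cons (by grind),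
      List.head?_reverse]
  rw [← hs, ← neighborSet_listGraph_cons (u := u) (v := v) (by grind), listGraph_append_cons]
  rfl

open Classical in
lemma deg_listGraph (hl : l.Nodup) (hv : v ∈ l) :
    deg (listGraph l) v =
      (if l.head? = some v then 0 else 1) + (if l.getLast? = some v then 0 else 1) := by
  obtain ⟨s, u, rfl⟩ := List.append_of_mem hv
  rw [deg, neighborSet_listGraph_append_cons hl]
  have hhead : (s ++ v :: u).head? = some v ↔ s = [] := by cases s <;> grind
  have hlast : (s ++ v :: u).getLast? = some v ↔ u = [] := by
    rcases u.eq_nil_or_concat with rfl | ⟨u, q, rfl⟩ <;> grind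
  rw [if_congr hhead rfl rfl, if_congr hlast rfl rfl]
  rcases s.eq_nil_or_concat with rfl | ⟨s, p, rfl⟩ <;> rcases u with _ | ⟨q, u⟩
  · simp
  · simp
  · simp
  · have hqp : q ≠ p := by grind
    simp [Set.ncard_pair hqp]

lemma deg_listGraph_le_two (hl : l.Nodup) (v : V) : deg (listGraph l) v ≤ 2 := by
  classical
  by_cases hv : v ∈ l
  · rw [deg_listGraph hl hv]
    split_ifs <;> simp
  · have hempty : (listGraph l).neighborSet v = ∅ :=
      Set.eq_empty_of_forall_notMem fun w hw => hv (mem_of_listGraph_adj hw)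
    simp [deg, hempty]

lemma finite_neighborSet_listGraph (l : List V) (v : V) :
    ((listGraph l).neighborSet v).Finite :=
  l.finite_toSet.subset fun _ hw => mem_of_listGraph_adj hw.symm

end ListGraph

lemma ncard_nbhd_le {G : SimpleGraph V} {X : Set V} {d : ℕ} (hX : X.Finite)
    (hd : ∀ x ∈ X, deg G x ≤ d) : (nbhd G X).ncard ≤ d * X.ncard := by
  have hunion : nbhd G X = ⋃ x ∈ hX.toFinset, G.neighborSet x := by
    ext v
    simp [nbhd, G.adj_comm v]
  calc (nbhd G X).ncard ≤ ∑ x ∈ hX.toFinset, deg G x := by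
        rw [hunion]
        exact Finset.set_ncard_biUnion_le _ _
    _ ≤ hX.toFinset.card * d := Finset.sum_le_card_nsmul _ _ _ (by simpa using hd)
    _ = d * X.ncard := by rw [Set.ncard_eq_toFinset_card X hX, mul_comm]

section Rotation

open SimpleGraph

variable {G H : SimpleGraph V} {P l l' : List V} {t : ℕ} {v x y : V}

lemma IsRotation.perm (h : IsRotation G P l l') : l'.Perm l := by
  obtain ⟨a, c, b, t₁, t₂, rfl, -, -, rfl⟩ := h
  simpa using (List.reverse_perm (a :: t₁ ++ [c])).append_right (b :: t₂)

lemma IsRotation.getLast?_eq (h : IsRotation G P l l') : l'.getLast? = l.getLast? := by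
  obtain ⟨a, c, b, t₁, t₂, rfl, -, -, rfl⟩ := h
  simp [List.getLast?_append, List.getLast?_cons]

lemma IsRotation.listGraph_le (h : IsRotation G P l l') : listGraph l' ≤ G ⊔ listGraph l := by
  obtain ⟨a, c, b, t₁, t₂, rfl, hab, -, rfl⟩ := h
  rw [List.cons_append (bs := [c]), listGraph_reverse_append_cons, ← List.cons_append,
    listGraph_append_cons_cons]
  refine sup_le (sup_le ?_ ?_) ?_
  · exact le_sup_of_le_right (le_sup_of_le_left le_sup_left)
  · exact le_sup_of_le_left ((edge_le_iff G).2 (.inr hab))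
  · exact le_sup_of_le_right le_sup_right

lemma IsRotation.exists_listGraph_le_edge_sup (h : IsRotation G P l l') :
    ∃ c b, l'.head? = some c ∧ listGraph l ≤ edge c b ⊔ listGraph l' := by
  obtain ⟨a, c, b, t₁, t₂, rfl, -, -, rfl⟩ := h
  refine ⟨c, b, by simp, ?_⟩
  rw [List.cons_append (bs := [c]), listGraph_reverse_append_cons, ← List.cons_append,
    listGraph_append_cons_cons]
  refine sup_le (sup_le ?_ le_sup_left) ?_
  · exact le_sup_of_le_right (le_sup_of_le_left le_sup_left)
  · exact le_sup_of_le_right le_sup_right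

lemma rset_subset_rset_succ : Rset G P t ⊆ Rset G P (t + 1) :=
  fun _ ⟨l, hl, hx⟩ => ⟨l, .inl hl, hx⟩

lemma mem_rotSet_self : P ∈ rotSet G P t := by
  induction t with
  | zero => rfl
  | succ t ih => exact .inl ih

lemma rotSet_induction {motive : List V → Prop} (self : motive P)
    (rotate : ∀ l l', motive l → IsRotation G P l l' → motive l') (hl : l ∈ rotSet G P t) :
    motive l := by
  induction t generalizing l with
  | zero => rwa [hl]
  | succ t ih =>
    rcases hl with hl | ⟨l₀, hl₀, hrot⟩
    · exact ih hl
    · exact rotate l₀ l (ih hl₀) hrot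

lemma perm_of_mem_rotSet (hl : l ∈ rotSet G P t) : l.Perm P :=
  rotSet_induction (motive := fun l => l.Perm P) .rfl
    (fun _ _ ih hrot => hrot.perm.trans ih) hl

lemma getLast?_eq_of_mem_rotSet (hl : l ∈ rotSet G P t) : l.getLast? = P.getLast? :=
  rotSet_induction (motive := fun l => l.getLast? = P.getLast?) rfl
    (fun _ _ ih hrot => hrot.getLast?_eq.trans ih) hl

lemma listGraph_le_of_mem_rotSet (hl : l ∈ rotSet G P t) : listGraph l ≤ G ⊔ listGraph P :=
  rotSet_induction (motive := fun l => listGraph l ≤ G ⊔ listGraph P) le_sup_right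
    (fun _ _ ih hrot => hrot.listGraph_le.trans (sup_le le_sup_left ih)) hl

lemma listGraph_adj_of_mem_rotSet (hl : l ∈ rotSet G P t) (h : (listGraph P).Adj x y)
    (hx : x ∉ Rset G P t) (hy : y ∉ Rset G P t) : (listGraph l).Adj x y := by
  induction t generalizing l with
  | zero => rwa [hl]
  | succ t ih =>
    have ih' : ∀ l₀ ∈ rotSet G P t, (listGraph l₀).Adj x y := fun l₀ hl₀ =>
      ih hl₀ (fun h => hx (rset_subset_rset_succ h)) (fun h => hy (rset_subset_rset_succ h))
    rcases hl with hl | ⟨l₀, hl₀, hrot⟩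
    · exact ih' l hl
    · obtain ⟨c, b, hc, hle⟩ := hrot.exists_listGraph_le_edge_sup
      have hcR : c ∈ Rset G P (t + 1) := ⟨l, .inr ⟨l₀, hl₀, hrot⟩, hc⟩
      have hedge : ¬ (edge c b).Adj x y := by grind
      exact (hle (ih' l₀ hl₀)).resolve_left hedge

lemma rset_subset : Rset G P t ⊆ {v | v ∈ P} := fun _ ⟨_, hl, hx⟩ =>
  (perm_of_mem_rotSet hl).mem_iff.1 (List.mem_of_head? hx)

lemma rset_finite : (Rset G P t).Finite := P.finite_toSet.subset rset_subset

lemma IsLongestPathOn.of_mem_rotSet (hP : IsLongestPathOn H P) (hGH : G ≤ H)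
    (hl : l ∈ rotSet G P t) : IsLongestPathOn H l := by
  obtain ⟨hne, hnodup, hle⟩ := isPathOn_iff.1 hP.1
  have hperm := perm_of_mem_rotSet hl
  refine ⟨isPathOn_iff.2 ⟨?_, hperm.nodup_iff.2 hnodup, ?_⟩, ?_⟩
  · rintro rfl
    exact hne hperm.nil_eq.symm
  · exact (listGraph_le_of_mem_rotSet hl).trans (sup_le hGH hle)
  · simpa only [hperm.length_eq] using hP.2

lemma IsLongestPathOn.mem_of_adj_head (hl : IsLongestPathOn H l) (hx : l.head? = some x)
    (hvx : H.Adj v x) : v ∈ l := by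
  by_contra hv
  obtain ⟨l, rfl⟩ := List.head?_eq_some_iff.1 hx
  have hpath : IsPathOn H (v :: x :: l) :=
    ⟨by simp, List.nodup_cons.2 ⟨hv, hl.1.2.1⟩, List.isChain_cons_cons.2 ⟨hvx, hl.1.2.2⟩⟩
  simpa using hl.2 _ hpath

lemma neighborSet_listGraph_eq_of_mem_rotSet (hP : P.Nodup) (hl : l ∈ rotSet G P t) (hv : v ∈ l)
    (hvR : v ∉ Rset G P t) (hvN : v ∉ nbhd (listGraph P) (Rset G P t)) :
    (listGraph P).neighborSet v = (listGraph l).neighborSet v := by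
  classical
  have hperm := perm_of_mem_rotSet hl
  have hsub : (listGraph P).neighborSet v ⊆ (listGraph l).neighborSet v := fun w hw =>
    listGraph_adj_of_mem_rotSet hl hw hvR fun hwR => hvN ⟨w, hwR, hw⟩
  have hdeg : deg (listGraph l) v = deg (listGraph P) v := by
    have hheadl : l.head? ≠ some v := fun h => hvR ⟨l, hl, h⟩
    have hheadP : P.head? ≠ some v := fun h => hvR ⟨P, mem_rotSet_self, h⟩
    rw [deg_listGraph (hperm.nodup_iff.2 hP) hv, deg_listGraph hP (hperm.mem_iff.1 hv),
      if_neg hheadl, if_neg hheadP, getLast?_eq_of_mem_rotSet hl]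
  exact Set.eq_of_subset_of_ncard_le hsub hdeg.le (finite_neighborSet_listGraph l v)

lemma mem_rset_succ_of_adj_head {c : V} {s u : List V} (hl : s ++ c :: v :: u ∈ rotSet G P t)
    (hx : (s ++ c :: v :: u).head? = some x) (hxv : G.Adj x v) (hcv : (listGraph P).Adj c v) :
    c ∈ Rset G P (t + 1) := by
  cases s with
  | nil => exact rset_subset_rset_succ ⟨_, hl, rfl⟩
  | cons a s =>
    obtain rfl : a = x := by simpa using hx
    exact ⟨(a :: s ++ [c]).reverse ++ v :: u, .inr ⟨_, hl, a, c, v, s, u, rfl, hxv, hcv, rfl⟩,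
      by simp⟩

lemma nbhd_rset_subset (hGH : G ≤ H) (hP : IsLongestPathOn H P) (t : ℕ) :
    nbhd G (Rset G P t) ⊆ Rset G P t ∪ nbhd (listGraph P) (Rset G P (t + 1)) := by
  rintro v ⟨x, ⟨l, hl, hx⟩, hvx⟩
  by_cases hvR : v ∈ Rset G P t
  · exact .inl hvR
  right
  by_cases hvN : v ∈ nbhd (listGraph P) (Rset G P t)
  · obtain ⟨w, hw, hvw⟩ := hvN
    exact ⟨w, rset_subset_rset_succ hw, hvw⟩
  have hlongest := hP.of_mem_rotSet hGH hl
  have hvl : v ∈ l := hlongest.mem_of_adj_head hx (hGH hvx)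
  have hnbrs := neighborSet_listGraph_eq_of_mem_rotSet hP.1.2.1 hl hvl hvR hvN
  obtain ⟨s, c, u, rfl⟩ : ∃ s c u, l = s ++ c :: v :: u := by
    obtain ⟨s, u, rfl⟩ := List.append_of_mem hvl
    rcases s.eq_nil_or_concat with rfl | ⟨s, c, rfl⟩
    · exact absurd ⟨_, hl, rfl⟩ hvR
    · exact ⟨s, c, u, by simp⟩
  have hvc : (listGraph P).Adj v c := by
    rw [← mem_neighborSet, hnbrs, mem_neighborSet, listGraph_append_cons_cons]
    have hcv : c ≠ v := by
      have hnodup := hlongest.1.2.1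
      grind
    exact .inl (.inr ((edge_adj ..).2 ⟨.inr ⟨rfl, rfl⟩, hcv.symm⟩))
  exact ⟨c, mem_rset_succ_of_adj_head hl hx hvx.symm hvc.symm, hvc⟩

theorem rotation_endpoint_bound_general {V : Type*} {G H : SimpleGraph V} {P : List V}
    (hGH : G ≤ H) (hP : IsLongestPathOn H P) (t : ℕ) :
    (nbhd G (Rset G P t)).ncard ≤ (Rset G P t).ncard + 2 * (Rset G P (t + 1)).ncard := by
  have hfin : (nbhd (listGraph P) (Rset G P (t + 1))).Finite :=
    P.finite_toSet.subset fun v ⟨_, _, hvx⟩ => mem_of_listGraph_adj hvx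
  calc (nbhd G (Rset G P t)).ncard
      ≤ (Rset G P t ∪ nbhd (listGraph P) (Rset G P (t + 1))).ncard :=
        Set.ncard_le_ncard (nbhd_rset_subset hGH hP t) (rset_finite.union hfin)
    _ ≤ (Rset G P t).ncard + (nbhd (listGraph P) (Rset G P (t + 1))).ncard :=
        Set.ncard_union_le _ _
    _ ≤ (Rset G P t).ncard + 2 * (Rset G P (t + 1)).ncard :=
        Nat.add_le_add_left
          (ncard_nbhd_le rset_finite fun x _ => deg_listGraph_le_two hP.1.2.1 x) _

end Rotation

/-- Lemma 4.1.  Let `G` be a graph, `P'` a path on `V(G)`, and `P` a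
longest path in `G ∪ P'`.  Then for every `t ≥ 0` we have
`|R^{t+1}_{G,P,v_ℓ}| ≥ (1/2)(|N_G(R^t_{G,P,v_ℓ})| − 3|R^t_{G,P,v_ℓ}|)`. -/
theorem rotation_endpoint_bound {V : Type*} [Fintype V] (G : SimpleGraph V)
    (P' P : List V) (hP' : P'.Nodup)
    (hP : IsLongestPathOn (G ⊔ listGraph P') P) (t : ℕ) :
    (1/2 : ℝ) * (((nbhd G (Rset G P t)).ncard : ℝ) - 3 * ((Rset G P t).ncard : ℝ))
      ≤ ((Rset G P (t + 1)).ncard : ℝ) := by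
  have h := rotation_endpoint_bound_general le_sup_left hP t
  rify at h
  linarith [Nat.cast_nonneg (α := ℝ) (Rset G P t).ncard]

end Resilience
end
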